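/- arXiv:2408.13541 — 8 statements merged into one kernel-verified Lean document; each statement's English description precedes it below -/
import Mathlib

section
/- Let c ∈ {-1, 0, 1}, let γ > 0 and p ≥ 1. Set δ(c)/2 = π/2 if c = 1 and δ(c)/2 = +∞ if c ∈ {-1, 0}. Then there exists a constant K > 0, depending only on p, c and γ, such that for every Lebesgue-measurable set E ⊆ (0, δ(c)/2) of finite Lebesgue measure, ∫_E (s_c(t))^{γ - H(c)} dt ≤ K · ( ∫_E (s_c(t))^{p·γ - H(c)} dt )^{1/p}. -/
open MeasureTheory Real Set

/-- The Heaviside function: `H s = 1` if `0 ≤ s`, `0` otherwise. -/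
noncomputable def Hv (s : ℝ) : ℝ := if 0 ≤ s then 1 else 0

/-- The unified sine (curvature) function `s_c`. -/
noncomputable def sc (c t : ℝ) : ℝ :=
  if c = -1 then Real.sinh t else if c = 1 then Real.sin t else t

/-- The domain `(0, δ(X_c)/2)`: `(0, π/2)` for the sphere and `(0, ∞)` otherwise. -/
noncomputable def Dc (c : ℝ) : Set ℝ :=
  if c = 1 then Set.Ioo 0 (Real.pi / 2) else Set.Ioi 0

lemma aux_small (S : Set ℝ) (hS : MeasurableSet S) (f f' : ℝ → ℝ) (M : ℝ)
    (hf : ∀ x ∈ S, HasDerivAt f (f' x) x) (hinj : InjOn f S)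
    (hb : ∀ x ∈ S, 0 ≤ f x ∧ f x ≤ M) :
    ∫⁻ t in S, ENNReal.ofReal (f' t) ≤ ENNReal.ofReal M := by
  have h := lintegral_image_eq_lintegral_abs_deriv_mul hS
    (fun x hx => (hf x hx).hasDerivWithinAt) hinj (fun _ => 1)
  simp only [mul_one, lintegral_one, Measure.restrict_apply_univ] at h
  calc ∫⁻ t in S, ENNReal.ofReal (f' t) ≤ ∫⁻ t in S, ENNReal.ofReal |f' t| :=
        lintegral_mono fun t => ENNReal.ofReal_le_ofReal (le_abs_self _)
    _ = volume (f '' S) := h.symm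
    _ ≤ volume (Icc 0 M) := measure_mono (by rintro _ ⟨x, hx, rfl⟩; exact hb x hx)
    _ = ENNReal.ofReal M := by simp

lemma aux_core (D : Set ℝ) (hD : MeasurableSet D) (s f f' : ℝ → ℝ) (hs : Measurable s)
    (γ p h M N : ℝ) (hγ : 0 < γ) (hp : 1 ≤ p) (hM : 0 < M) (hN : 0 < N)
    (hpos : ∀ t ∈ D, 0 < s t)
    (hf : ∀ x ∈ D, HasDerivAt f (f' x) x) (hinj : InjOn f D)
    (hb : ∀ x ∈ D, 0 ≤ f x ∧ f x ≤ N * s x ^ γ)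
    (hw : ∀ x ∈ D, s x ^ (γ - h) ≤ M * f' x) :
    ∃ K : ℝ, 0 < K ∧
      ∀ E : Set ℝ, MeasurableSet E → E ⊆ D → volume E < ⊤ →
        (∫⁻ t in E, ENNReal.ofReal ((s t) ^ (γ - h))) ≤
        ENNReal.ofReal K *
          (∫⁻ t in E, ENNReal.ofReal ((s t) ^ (p * γ - h))) ^ (1 / p) := by
  refine ⟨M * N + 1, by positivity, fun E hE hED _ => ?_⟩
  set B := ∫⁻ t in E, ENNReal.ofReal ((s t) ^ (p * γ - h)) with hB
  have hp0 : 0 < p := by linarith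
  have key : ∀ r : ℝ, 0 < r → (∫⁻ t in E, ENNReal.ofReal ((s t) ^ (γ - h))) ≤
      ENNReal.ofReal (M * N * r ^ γ) + ENNReal.ofReal (r ^ (γ - p * γ)) * B := by
    intro r hr
    have hle : MeasurableSet {t | s t ≤ r} := measurableSet_le hs measurable_const
    rw [← lintegral_inter_add_sdiff _ E hle]
    gcongr
    · have h1 := aux_small (D ∩ {t | s t ≤ r}) (hD.inter hle) f f' (N * r ^ γ)
        (fun x hx => hf x hx.1) (hinj.mono inter_subset_left)
        (fun x hx => ⟨(hb x hx.1).1, (hb x hx.1).2.trans (by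
          have := hpos x hx.1
          have h2 : s x ≤ r := hx.2
          gcongr)⟩)
      calc ∫⁻ t in E ∩ {t | s t ≤ r}, ENNReal.ofReal ((s t) ^ (γ - h))
          ≤ ∫⁻ t in D ∩ {t | s t ≤ r}, ENNReal.ofReal ((s t) ^ (γ - h)) :=
            lintegral_mono_set (inter_subset_inter_left _ hED)
        _ ≤ ∫⁻ t in D ∩ {t | s t ≤ r}, ENNReal.ofReal M * ENNReal.ofReal (f' t) := by
            refine setLIntegral_mono' (hD.inter hle) fun x hx => ?_
            rw [← ENNReal.ofReal_mul hM.le]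
            exact ENNReal.ofReal_le_ofReal (hw x hx.1)
        _ = ENNReal.ofReal M * ∫⁻ t in D ∩ {t | s t ≤ r}, ENNReal.ofReal (f' t) :=
            lintegral_const_mul' _ _ ENNReal.ofReal_ne_top
        _ ≤ ENNReal.ofReal M * ENNReal.ofReal (N * r ^ γ) := by gcongr
        _ = _ := by rw [← ENNReal.ofReal_mul hM.le, mul_assoc]
    · calc ∫⁻ t in E \ {t | s t ≤ r}, ENNReal.ofReal ((s t) ^ (γ - h))
          ≤ ∫⁻ t in E \ {t | s t ≤ r}, ENNReal.ofReal (r ^ (γ - p * γ)) *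
              ENNReal.ofReal ((s t) ^ (p * γ - h)) := by
            refine setLIntegral_mono' (hE.diff hle) fun x hx => ?_
            rw [← ENNReal.ofReal_mul (by positivity)]
            apply ENNReal.ofReal_le_ofReal
            have h0 := hpos x (hED hx.1)
            have h2 : r ≤ s x := (not_le.1 hx.2).le
            calc s x ^ (γ - h) = s x ^ (γ - p * γ) * s x ^ (p * γ - h) := by
                  rw [← Real.rpow_add h0]; ring_nf
              _ ≤ _ := mul_le_mul_of_nonneg_right
                  (Real.rpow_le_rpow_of_nonpos hr h2 (by nlinarith)) (by positivity)
        _ = ENNReal.ofReal (r ^ (γ - p * γ)) * ∫⁻ t in E \ {t | s t ≤ r},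
              ENNReal.ofReal ((s t) ^ (p * γ - h)) :=
            lintegral_const_mul' _ _ ENNReal.ofReal_ne_top
        _ ≤ _ := by
            gcongr
            exact lintegral_mono_set sdiff_subset
  by_cases hB0 : B = 0
  · have : (∫⁻ t in E, ENNReal.ofReal ((s t) ^ (γ - h))) ≤ 0 := by
      refine le_of_forall_gt_imp_ge_of_dense fun a ha => ?_
      by_cases hat : a = ⊤
      · simp [hat]
      have ha' : 0 < a.toReal := ENNReal.toReal_pos ha.ne' hat
      have := key ((a.toReal / (M * N)) ^ (1 / γ)) (by positivity)
      rw [hB0, mul_zero, add_zero, ← Real.rpow_mul (by positivity), one_div,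
        inv_mul_cancel₀ hγ.ne', Real.rpow_one, mul_div_cancel₀ _ (by positivity),
        ENNReal.ofReal_toReal hat] at this
      exact this
    exact this.trans zero_le
  by_cases hBt : B = ⊤
  · rw [hBt, ENNReal.top_rpow_of_pos (by positivity), ENNReal.mul_top]
    · exact le_top
    · simp; positivity
  have hb' : 0 < B.toReal := ENNReal.toReal_pos hB0 hBt
  have hBe : B = ENNReal.ofReal B.toReal := (ENNReal.ofReal_toReal hBt).symm
  set b := B.toReal
  have := key (b ^ (1 / (p * γ))) (by positivity)
  refine this.trans ?_
  rw [hBe, ENNReal.ofReal_rpow_of_pos hb', ← ENNReal.ofReal_mul (by positivity),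
    ← ENNReal.ofReal_mul (by positivity), ← ENNReal.ofReal_add (by positivity) (by positivity)]
  apply ENNReal.ofReal_le_ofReal
  rw [← Real.rpow_mul hb'.le, ← Real.rpow_mul hb'.le]
  have e1 : 1 / (p * γ) * γ = 1 / p := by field_simp
  have e2 : 1 / (p * γ) * (γ - p * γ) = 1 / p - 1 := by field_simp
  rw [e1, e2, Real.rpow_sub hb', Real.rpow_one, div_mul_cancel₀ _ hb'.ne']
  linarith

lemma aux_inj (γ : ℝ) (hγ : 0 < γ) : InjOn (fun t : ℝ => t ^ γ / γ) (Ici 0) := by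
  intro x hx y hy h
  have : x ^ γ = y ^ γ := by
    have h' : x ^ γ / γ = y ^ γ / γ := h
    field_simp at h'
    exact h'
  exact (Real.rpow_left_inj hx hy hγ.ne').1 this

lemma aux_deriv (γ : ℝ) (hγ : 0 < γ) (x : ℝ) (hx : 0 < x) :
    HasDerivAt (fun t : ℝ => t ^ γ / γ) (x ^ (γ - 1)) x := by
  have := (Real.hasDerivAt_rpow_const (p := γ) (Or.inl hx.ne')).div_const γ
  rwa [mul_div_cancel_left₀ _ hγ.ne'] at this

theorem sc_endpoint_lemma (c : ℝ) (hc : c = -1 ∨ c = 0 ∨ c = 1)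
    (γ p : ℝ) (hγ : 0 < γ) (hp : 1 ≤ p) :
    ∃ K : ℝ, 0 < K ∧
      ∀ E : Set ℝ, MeasurableSet E → E ⊆ Dc c → volume E < ⊤ →
        (∫⁻ t in E, ENNReal.ofReal ((sc c t) ^ (γ - Hv c))) ≤
        ENNReal.ofReal K *
          (∫⁻ t in E, ENNReal.ofReal ((sc c t) ^ (p * γ - Hv c))) ^ (1 / p) := by
  rcases hc with rfl | rfl | rfl
  · have e1 : Dc (-1) = Ioi 0 := by norm_num [Dc]
    have e2 : sc (-1) = Real.sinh := by funext t; simp [sc]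
    have e3 : Hv (-1) = 0 := by norm_num [Hv]
    rw [e1, e2, e3]
    refine aux_core (Ioi 0) measurableSet_Ioi Real.sinh (fun t => Real.sinh t ^ γ / γ)
      (fun t => Real.sinh t ^ (γ - 1) * Real.cosh t) Real.measurable_sinh γ p 0 1 (1 / γ)
      hγ hp one_pos (by positivity) (fun t ht => Real.sinh_pos_iff.2 ht) ?_ ?_ ?_ ?_
    · intro x hx
      exact (aux_deriv γ hγ _ (Real.sinh_pos_iff.2 hx)).comp x (Real.hasDerivAt_sinh x)
    · intro x hx y hy h
      exact Real.sinh_injective (aux_inj γ hγ (Real.sinh_pos_iff.2 hx).le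
        (Real.sinh_pos_iff.2 hy).le h)
    · intro x hx
      have := Real.sinh_pos_iff.2 hx
      exact ⟨by positivity, le_of_eq (by ring)⟩
    · intro x hx
      have := Real.sinh_pos_iff.2 hx
      have h1 : Real.sinh x ^ (γ - 0) = Real.sinh x ^ (γ - 1) * Real.sinh x := by
        rw [sub_zero, Real.rpow_sub this, Real.rpow_one, div_mul_cancel₀ _ this.ne']
      rw [h1, one_mul]
      gcongr
      exact (Real.sinh_lt_cosh x).le
  · have e1 : Dc 0 = Ioi 0 := by norm_num [Dc]
    have e2 : sc 0 = fun t => t := by funext t; norm_num [sc]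
    have e3 : Hv 0 = 1 := by norm_num [Hv]
    rw [e1, e2, e3]
    refine aux_core (Ioi 0) measurableSet_Ioi (fun t => t) (fun t => t ^ γ / γ)
      (fun t => t ^ (γ - 1)) measurable_id γ p 1 1 (1 / γ)
      hγ hp one_pos (by positivity) (fun t ht => ht) (fun x hx => aux_deriv γ hγ x hx)
      ((aux_inj γ hγ).mono Ioi_subset_Ici_self) ?_ ?_
    · intro x hx
      have : 0 < x := hx
      exact ⟨by positivity, le_of_eq (by ring)⟩
    · intro x hx
      simp
  · have e1 : Dc 1 = Ioo 0 (Real.pi / 2) := by norm_num [Dc]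
    have e2 : sc 1 = Real.sin := by funext t; norm_num [sc]
    have e3 : Hv 1 = 1 := by norm_num [Hv]
    rw [e1, e2, e3]
    have hpi := Real.pi_pos
    have hsp : ∀ t ∈ Ioo 0 (Real.pi / 2), 0 < Real.sin t := fun t ht =>
      Real.sin_pos_of_pos_of_lt_pi ht.1 (by linarith [ht.2])
    have hj : ∀ t ∈ Ioo 0 (Real.pi / 2), 2 / Real.pi * t ≤ Real.sin t := fun t ht =>
      Real.mul_le_sin ht.1.le ht.2.le
    refine aux_core (Ioo 0 (Real.pi / 2)) measurableSet_Ioo Real.sin (fun t => t ^ γ / γ)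
      (fun t => t ^ (γ - 1)) Real.measurable_sin γ p 1 (1 + (2 / Real.pi) ^ (γ - 1))
      ((Real.pi / 2) ^ γ / γ)
      hγ hp (by positivity) (by positivity) hsp (fun x hx => aux_deriv γ hγ x hx.1)
      ((aux_inj γ hγ).mono (fun x hx => hx.1.le)) ?_ ?_
    · intro x hx
      have h0 := hx.1
      refine ⟨by positivity, ?_⟩
      have h1 : x ≤ Real.pi / 2 * Real.sin x := by
        have := hj x hx
        field_simp at this ⊢
        linarith
      have h2 : x ^ γ ≤ (Real.pi / 2) ^ γ * Real.sin x ^ γ := by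
        rw [← Real.mul_rpow (by positivity) (hsp x hx).le]
        gcongr
      calc x ^ γ / γ ≤ (Real.pi / 2) ^ γ * Real.sin x ^ γ / γ := by gcongr
        _ = _ := by ring
    · intro x hx
      have h0 := hx.1
      have h1 := hsp x hx
      have a1 : 0 < x ^ (γ - 1) := by positivity
      have a2 : 0 < (2 / Real.pi) ^ (γ - 1) * x ^ (γ - 1) := by positivity
      rcases le_total 1 γ with hg | hg
      · have : Real.sin x ^ (γ - 1) ≤ x ^ (γ - 1) :=
          Real.rpow_le_rpow h1.le (Real.sin_le h0.le) (by linarith)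
        linarith
      · have : Real.sin x ^ (γ - 1) ≤ (2 / Real.pi * x) ^ (γ - 1) :=
          Real.rpow_le_rpow_of_nonpos (by positivity) (hj x hx) (by linarith)
        rw [Real.mul_rpow (by positivity) h0.le] at this
        linarith
end

section
/- Let γ > 0 and p ≥ 1. Then there exists a constant K > 0, depending only on p and γ, such that for every Lebesgue-measurable set E ⊆ (0, ∞) of finite Lebesgue measure, ∫_E s^{γ - 1} ds ≤ K · ( ∫_E s^{p·γ - 1} ds )^{1/p}. -/
open MeasureTheory Real Set

theorem pel_aux (γ R : ℝ) (hγ : 0 < γ) (hR : 0 < R) :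
    (∫⁻ s in Set.Ioc 0 R, ENNReal.ofReal (s ^ (γ - 1))) = ENNReal.ofReal (R ^ γ / γ) := by
  have hi : IntervalIntegrable (fun s : ℝ => s ^ (γ - 1)) volume 0 R :=
    intervalIntegral.intervalIntegrable_rpow' (by linarith)
  rw [intervalIntegrable_iff_integrableOn_Ioc_of_le hR.le] at hi
  rw [← ofReal_integral_eq_lintegral_ofReal hi]
  · rw [← intervalIntegral.integral_of_le hR.le, integral_rpow (Or.inl (by linarith))]
    simp [Real.zero_rpow hγ.ne']
  · filter_upwards [ae_restrict_mem measurableSet_Ioc] with s hs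
    exact Real.rpow_nonneg hs.1.le _

theorem power_endpoint_lemma (γ p : ℝ) (hγ : 0 < γ) (hp : 1 ≤ p) :
    ∃ K : ℝ, 0 < K ∧
      ∀ E : Set ℝ, MeasurableSet E → E ⊆ Set.Ioi 0 → volume E < ⊤ →
        (∫⁻ s in E, ENNReal.ofReal (s ^ (γ - 1))) ≤
        ENNReal.ofReal K * (∫⁻ s in E, ENNReal.ofReal (s ^ (p * γ - 1))) ^ (1 / p) := by
  refine ⟨1 / γ + 1, by positivity, ?_⟩
  intro E hE hE0 _
  have hp0 : 0 < p := by linarith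
  have hK : 0 < 1 / γ + 1 := by positivity
  have hmeas : ∀ a : ℝ, Measurable (fun s : ℝ => ENNReal.ofReal (s ^ a)) := fun a => by fun_prop
  set B := ∫⁻ s in E, ENNReal.ofReal (s ^ (p * γ - 1)) with hB
  by_cases hB0 : B = 0
  · have h1 : (∫⁻ s in E, ENNReal.ofReal (s ^ (γ - 1))) = 0 := by
      rw [hB, lintegral_eq_zero_iff (hmeas _)] at hB0
      rw [lintegral_eq_zero_iff (hmeas _)]
      filter_upwards [hB0, ae_restrict_mem hE] with s hs hsE
      have h0 : 0 < s := hE0 hsE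
      have := Real.rpow_pos_of_pos h0 (p * γ - 1)
      simp at hs
      linarith
    rw [h1]; exact zero_le
  by_cases hBt : B = ⊤
  · rw [hBt, ENNReal.top_rpow_of_pos (by positivity), ENNReal.mul_top (by simpa using hK)]
    exact le_top
  set b := B.toReal with hb
  have hb0 : 0 < b := ENNReal.toReal_pos hB0 hBt
  have hBb : B = ENNReal.ofReal b := (ENNReal.ofReal_toReal hBt).symm
  set R := b ^ (1 / (p * γ)) with hRdef
  have hR : 0 < R := Real.rpow_pos_of_pos hb0 _
  have hR1 : R ^ γ = b ^ (1 / p) := by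
    rw [hRdef, ← Real.rpow_mul hb0.le]; congr 1; field_simp
  have hR2 : R ^ (-((p - 1) * γ)) * b = b ^ (1 / p) := by
    rw [hRdef, ← Real.rpow_mul hb0.le]
    nth_rewrite 2 [← Real.rpow_one b]
    rw [← Real.rpow_add hb0]; congr 1; field_simp; ring
  have hsub : E ⊆ Set.Ioc 0 R ∪ (E ∩ Set.Ioi R) := by
    intro s hs
    rcases le_or_gt s R with h | h
    · exact Or.inl ⟨hE0 hs, h⟩
    · exact Or.inr ⟨hs, h⟩
  have h2 : (∫⁻ s in E ∩ Set.Ioi R, ENNReal.ofReal (s ^ (γ - 1)))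
      ≤ ENNReal.ofReal (R ^ (-((p - 1) * γ))) * B := by
    calc _ ≤ ∫⁻ s in E ∩ Set.Ioi R, ENNReal.ofReal (R ^ (-((p - 1) * γ))) *
              ENNReal.ofReal (s ^ (p * γ - 1)) := by
          refine setLIntegral_mono' (hE.inter measurableSet_Ioi) ?_
          rintro s ⟨_, hs⟩
          have hs' : R < s := hs
          have hs0 : 0 < s := hR.trans hs'
          rw [← ENNReal.ofReal_mul (by positivity)]
          apply ENNReal.ofReal_le_ofReal
          have e : s ^ (γ - 1) = s ^ (-((p - 1) * γ)) * s ^ (p * γ - 1) := by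
            rw [← Real.rpow_add hs0]; congr 1; ring
          rw [e]
          refine mul_le_mul_of_nonneg_right ?_ (by positivity)
          exact Real.rpow_le_rpow_of_nonpos hR hs'.le
            (neg_nonpos.2 (mul_nonneg (by linarith) hγ.le))
      _ = ENNReal.ofReal (R ^ (-((p - 1) * γ))) *
            ∫⁻ s in E ∩ Set.Ioi R, ENNReal.ofReal (s ^ (p * γ - 1)) :=
          lintegral_const_mul _ (hmeas _)
      _ ≤ _ := by
          gcongr
          exact lintegral_mono_set inter_subset_left
  calc _ ≤ _ := lintegral_mono_set hsub
    _ ≤ _ := lintegral_union_le _ _ _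
    _ ≤ ENNReal.ofReal (R ^ γ / γ) + ENNReal.ofReal (R ^ (-((p - 1) * γ))) * B :=
        add_le_add (pel_aux γ R hγ hR).le h2
    _ = _ := by
        rw [hBb, ENNReal.ofReal_rpow_of_pos hb0, ← ENNReal.ofReal_mul (by positivity),
          ← ENNReal.ofReal_mul hK.le, hR1, hR2, ← ENNReal.ofReal_add (by positivity) (by positivity)]
        congr 1; ring
end

section
/- Let n ≥ 3 and 2 ≤ k ≤ n - 1. There exists a constant C > 0, depending only on n and k, such that for every radial Lebesgue-measurable set E ⊆ ℝⁿ of finite Lebesgue measure and every k-dimensional affine subspace ξ ⊆ ℝⁿ, the k-dimensional Hausdorff measure of E ∩ ξ satisfies μH^k(E ∩ ξ) ≤ C · (λ(E))^{k/n}, where λ denotes Lebesgue measure on ℝⁿ. -/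
open MeasureTheory Real Set

open scoped ENNReal

lemma kp_polar {F : Type*} [NormedAddCommGroup F] [NormedSpace ℝ F] [FiniteDimensional ℝ F]
    [Nontrivial F] [MeasurableSpace F] [BorelSpace F] (μ : Measure F) [μ.IsAddHaarMeasure]
    (B : Set ℝ) (hB : MeasurableSet B) :
    μ {x : F | ‖x‖ ∈ B} = μ.toSphere univ *
      ∫⁻ y in Ioi (0:ℝ), ENNReal.ofReal (y ^ (Module.finrank ℝ F - 1)) * B.indicator 1 y := by
  have hS : MeasurableSet {x : F | ‖x‖ ∈ B} := measurable_norm hB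
  have h0 : MeasurableSet (({0}ᶜ : Set F)) := (measurableSet_singleton _).compl
  have h1 : μ {x : F | ‖x‖ ∈ B} =
      (μ.comap (Subtype.val : ({0}ᶜ : Set F) → F)) {x | ‖x.1‖ ∈ B} := by
    have e : (Subtype.val '' {x : ({0}ᶜ : Set F) | ‖x.1‖ ∈ B}) = {x : F | ‖x‖ ∈ B} ∩ {0}ᶜ := by
      ext x; simp [and_comm]
    rw [comap_subtype_coe_apply h0, e, ← Measure.restrict_apply hS,
      restrict_compl_singleton]
  have hB' : MeasurableSet {r : Ioi (0:ℝ) | r.1 ∈ B} := measurable_subtype_coe hB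
  have h2 : (μ.comap (Subtype.val : ({0}ᶜ : Set F) → F)) {x | ‖x.1‖ ∈ B} =
      (μ.toSphere.prod (.volumeIoiPow (Module.finrank ℝ F - 1)))
        (univ ×ˢ {r : Ioi (0:ℝ) | r.1 ∈ B}) := by
    rw [← μ.measurePreserving_homeomorphUnitSphereProd.measure_preimage
      (MeasurableSet.univ.prod hB').nullMeasurableSet]
    congr 1
    ext x
    simp
  rw [h1, h2, Measure.prod_prod]
  congr 1
  rw [Measure.volumeIoiPow, withDensity_apply _ hB', ← lintegral_indicator hB',
    ← lintegral_subtype_comap measurableSet_Ioi]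
  congr 1
  ext r
  by_cases hr : r.1 ∈ B <;> simp [indicator, hr]

lemma kp_change (k : ℕ) (hk : 2 ≤ k) (d : ℝ) (A : Set ℝ) :
    ∫⁻ y in Ioi (0:ℝ), ENNReal.ofReal (y ^ (k - 1)) *
        ((fun y => √(d ^ 2 + y ^ 2)) ⁻¹' A).indicator 1 y ≤
      ∫⁻ y in Ioi (0:ℝ), ENNReal.ofReal (y ^ (k - 1)) * A.indicator 1 y := by
  set φ : ℝ → ℝ := fun y => √(d ^ 2 + y ^ 2) with hφ
  have hpos : ∀ y ∈ Ioi (0:ℝ), 0 < d ^ 2 + y ^ 2 := by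
    intro y (hy : 0 < y); positivity
  have hder : ∀ y ∈ Ioi (0:ℝ), HasDerivWithinAt φ (y / φ y) (Ioi 0) y := by
    intro y hy
    have h := (((hasDerivAt_id y).pow 2).const_add (d ^ 2)).sqrt (hpos y hy).ne'
    refine (h.congr_deriv ?_).hasDerivWithinAt
    have : φ y ≠ 0 := (Real.sqrt_pos.2 (hpos y hy)).ne'
    simp only [hφ, id, Pi.pow_apply] at this ⊢
    field_simp
    simp
  have hinj : InjOn φ (Ioi 0) := by
    intro x (hx : 0 < x) y (hy : 0 < y) h
    have h' := (Real.sqrt_inj (hpos x hx).le (hpos y hy).le).1 h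
    have : x ^ 2 = y ^ 2 := by linarith
    exact (pow_left_inj₀ hx.le hy.le two_ne_zero).1 this
  have hsub : φ '' Ioi 0 ⊆ Ioi 0 := by
    rintro _ ⟨y, hy, rfl⟩
    exact Real.sqrt_pos.2 (hpos y hy)
  refine le_trans ?_ (lintegral_mono_set hsub)
  rw [lintegral_image_eq_lintegral_abs_deriv_mul measurableSet_Ioi hder hinj]
  refine setLIntegral_mono' measurableSet_Ioi ?_
  intro y hy
  have hy0 : 0 < y := hy
  have hφ0 : 0 < φ y := Real.sqrt_pos.2 (hpos y hy)
  rw [← mul_assoc, ← ENNReal.ofReal_mul (abs_nonneg _)]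
  have e : (φ ⁻¹' A).indicator (1 : ℝ → ℝ≥0∞) y = A.indicator 1 (φ y) := rfl
  rw [e]
  gcongr
  rw [abs_of_pos (by positivity)]
  have hle : y ≤ φ y := Real.le_sqrt_of_sq_le (by nlinarith [sq_nonneg d])
  obtain ⟨j, rfl⟩ : ∃ j, k = j + 2 := ⟨k - 2, by omega⟩
  have : y / φ y * φ y ^ (j + 2 - 1) = y * φ y ^ j := by
    rw [show j + 2 - 1 = j + 1 by omega, pow_succ]; field_simp
  rw [this, show j + 2 - 1 = j + 1 by omega, pow_succ, mul_comm]
  gcongr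

lemma kp_R (n k : ℕ) (hk : 2 ≤ k) (hkn : k < n) (A : Set ℝ) (hA : MeasurableSet A)
    (R : ℝ) (hR : 0 < R) :
    ∫⁻ y in Ioi (0:ℝ), ENNReal.ofReal (y ^ (k - 1)) * A.indicator 1 y ≤
      ENNReal.ofReal (R ^ k) + ENNReal.ofReal ((R ^ (n - k))⁻¹) *
        ∫⁻ y in Ioi (0:ℝ), ENNReal.ofReal (y ^ (n - 1)) * A.indicator 1 y := by
  have hm : Measurable fun y : ℝ => ENNReal.ofReal (y ^ (n - 1)) * A.indicator (1 : ℝ → ℝ≥0∞) y :=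
    (by fun_prop : Measurable fun y : ℝ => ENNReal.ofReal (y ^ (n - 1))).mul
      (measurable_one.indicator hA)
  have e1 : ENNReal.ofReal (R ^ k) = ∫⁻ y in Ioi (0:ℝ),
      (Ioc 0 R).indicator (fun _ => ENNReal.ofReal (R ^ (k - 1))) y := by
    rw [setLIntegral_indicator measurableSet_Ioc, inter_eq_left.2 (fun x hx => hx.1),
      setLIntegral_const, Real.volume_Ioc, sub_zero, ← ENNReal.ofReal_mul (by positivity),
      ← pow_succ, show k - 1 + 1 = k by omega]
  rw [e1, ← lintegral_const_mul _ hm, ← lintegral_add_left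
    (measurable_const.indicator measurableSet_Ioc)]
  refine setLIntegral_mono' measurableSet_Ioi ?_
  intro y hy
  have hy0 : 0 < y := hy
  by_cases hyA : y ∈ A
  · simp only [indicator_of_mem hyA, Pi.one_apply, mul_one]
    by_cases hyR : y ≤ R
    · rw [indicator_of_mem (show y ∈ Ioc 0 R from ⟨hy0, hyR⟩)]
      refine le_trans ?_ le_self_add
      gcongr
    · refine le_trans ?_ le_add_self
      rw [← ENNReal.ofReal_mul (by positivity)]
      gcongr
      rw [inv_mul_eq_div, le_div_iff₀ (by positivity), show n - 1 = (k - 1) + (n - k) by omega,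
        pow_add]
      push Not at hyR
      gcongr
  · simp [hyA]

lemma kp_oned (n k : ℕ) (hk : 2 ≤ k) (hkn : k < n) (A : Set ℝ) (hA : MeasurableSet A)
    (hfin : ∫⁻ y in Ioi (0:ℝ), ENNReal.ofReal (y ^ (n - 1)) * A.indicator 1 y ≠ ⊤) :
    ∫⁻ y in Ioi (0:ℝ), ENNReal.ofReal (y ^ (k - 1)) * A.indicator 1 y ≤
      2 * (∫⁻ y in Ioi (0:ℝ), ENNReal.ofReal (y ^ (n - 1)) * A.indicator 1 y) ^ ((k:ℝ) / n) := by
  have h := kp_R n k hk hkn A hA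
  set K := ∫⁻ y in Ioi (0:ℝ), ENNReal.ofReal (y ^ (k - 1)) * A.indicator 1 y
  set M := ∫⁻ y in Ioi (0:ℝ), ENNReal.ofReal (y ^ (n - 1)) * A.indicator 1 y
  have hn0 : (n:ℝ) ≠ 0 := by
    have : n ≠ 0 := by omega
    exact_mod_cast this
  by_cases hM : M = 0
  · rw [hM] at h
    have : K = 0 := by
      refine le_antisymm ?_ zero_le
      refine ge_of_tendsto (f := fun R : ℝ => ENNReal.ofReal (R ^ k))
        (x := nhdsWithin 0 (Ioi 0)) ?_ ?_
      · have : Filter.Tendsto (fun R : ℝ => ENNReal.ofReal (R ^ k)) (nhds 0)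
          (nhds (ENNReal.ofReal (0 ^ k))) :=
          (ENNReal.continuous_ofReal.comp (continuous_pow k)).tendsto 0
        rw [zero_pow (by omega), ENNReal.ofReal_zero] at this
        exact this.mono_left nhdsWithin_le_nhds
      · filter_upwards [self_mem_nhdsWithin] with R hR
        simpa using h R hR
    rw [this]; exact zero_le
  · have hMp : 0 < M.toReal := ENNReal.toReal_pos hM hfin
    set R := M.toReal ^ ((1:ℝ) / n) with hRdef
    have hR : 0 < R := Real.rpow_pos_of_pos hMp _
    have hRn : R ^ n = M.toReal := by
      rw [hRdef, ← Real.rpow_natCast, ← Real.rpow_mul hMp.le]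
      field_simp
      simp
    have hRk : ENNReal.ofReal (R ^ k) = M ^ ((k:ℝ) / n) := by
      rw [hRdef, ← Real.rpow_natCast, ← Real.rpow_mul hMp.le, ← ENNReal.ofReal_rpow_of_pos hMp,
        ENNReal.ofReal_toReal hfin]
      congr 1
      field_simp
    refine (h R hR).trans ?_
    have e : M = ENNReal.ofReal (R ^ n) := by rw [hRn, ENNReal.ofReal_toReal hfin]
    rw [← hRk, two_mul]
    gcongr
    conv_lhs => rw [e]
    rw [← ENNReal.ofReal_mul (by positivity)]
    gcongr
    rw [inv_mul_eq_div, div_le_iff₀ (by positivity), ← pow_add, show k + (n - k) = n by omega]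

lemma kp_slice (n k : ℕ) (A : Set ℝ)
    (ξ : AffineSubspace ℝ (EuclideanSpace ℝ (Fin n)))
    (hne : (ξ : Set (EuclideanSpace ℝ (Fin n))).Nonempty)
    (hd : Module.finrank ℝ ξ.direction = k) :
    ∃ d : ℝ, μH[(k:ℝ)] ({x : EuclideanSpace ℝ (Fin n) | ‖x‖ ∈ A} ∩
        (ξ : Set (EuclideanSpace ℝ (Fin n)))) =
      μH[(k:ℝ)] {y : EuclideanSpace ℝ (Fin k) | ‖y‖ ∈ (fun y => √(d ^ 2 + y ^ 2)) ⁻¹' A} := by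
  obtain ⟨q, hq⟩ := hne
  set V := ξ.direction with hV
  set p : EuclideanSpace ℝ (Fin n) := q - V.starProjection q with hp
  have hpo : p ∈ Vᗮ := V.sub_starProjection_mem_orthogonal q
  have hpξ : p ∈ ξ := by
    have : -(V.starProjection q) ∈ V := V.neg_mem (V.starProjection_apply_mem q)
    have := AffineSubspace.vadd_mem_of_mem_direction this hq
    rwa [vadd_eq_add, neg_add_eq_sub] at this
  let e : V ≃ₗᵢ[ℝ] EuclideanSpace ℝ (Fin k) :=
    ((stdOrthonormalBasis ℝ V).reindex (finCongr hd)).repr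
  let f : EuclideanSpace ℝ (Fin k) → EuclideanSpace ℝ (Fin n) := fun y => p + (e.symm y : V)
  have hf : Isometry f := by
    refine Isometry.of_dist_eq fun x y => ?_
    simp only [f, dist_add_left]
    rw [← Subtype.dist_eq, e.symm.dist_map]
  have hnorm : ∀ y, ‖f y‖ = √(‖p‖ ^ 2 + ‖y‖ ^ 2) := by
    intro y
    have h := norm_add_sq_eq_norm_sq_add_norm_sq_of_inner_eq_zero p
      ((e.symm y : V) : EuclideanSpace ℝ (Fin n))
      (V.inner_left_of_mem_orthogonal (e.symm y).2 hpo)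
    have h2 : ‖((e.symm y : V) : EuclideanSpace ℝ (Fin n))‖ = ‖y‖ := by
      rw [← Submodule.coe_norm, e.symm.norm_map]
    rw [h2] at h
    rw [eq_comm, Real.sqrt_eq_iff_mul_self_eq (by positivity) (norm_nonneg _), h]
    ring
  refine ⟨‖p‖, ?_⟩
  rw [← hf.hausdorffMeasure_image (Or.inl (by positivity))]
  congr 1
  ext x
  constructor
  · rintro ⟨hx, hxξ⟩
    have hx' : x - p ∈ V := AffineSubspace.vsub_mem_direction hxξ hpξ
    have hfx : f (e ⟨x - p, hx'⟩) = x := by simp [f]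
    refine ⟨e ⟨x - p, hx'⟩, ?_, hfx⟩
    show √(‖p‖ ^ 2 + ‖_‖ ^ 2) ∈ A
    rw [← hnorm, hfx]; exact hx
  · rintro ⟨y, hy, rfl⟩
    refine ⟨?_, ?_⟩
    · show ‖f y‖ ∈ A
      rw [hnorm]; exact hy
    · have := AffineSubspace.vadd_mem_of_mem_direction (e.symm y).2 hpξ
      rw [vadd_eq_add, add_comm] at this
      exact this

theorem euclidean_kplane_endpoint (n k : ℕ) (hn : 3 ≤ n) (hk : 2 ≤ k) (hkn : k ≤ n - 1) :
    ∃ C : ℝ, 0 < C ∧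
      ∀ (E : Set (EuclideanSpace ℝ (Fin n))) (A : Set ℝ), MeasurableSet A →
        E = {x : EuclideanSpace ℝ (Fin n) | ‖x‖ ∈ A} → volume E < ⊤ →
        ∀ ξ : AffineSubspace ℝ (EuclideanSpace ℝ (Fin n)),
          (ξ : Set (EuclideanSpace ℝ (Fin n))).Nonempty →
          Module.finrank ℝ ξ.direction = k →
          μH[(k : ℝ)] (E ∩ (ξ : Set (EuclideanSpace ℝ (Fin n)))) ≤
            ENNReal.ofReal C * (volume E) ^ ((k : ℝ) / n) := by
  have : Nonempty (Fin n) := ⟨⟨0, by omega⟩⟩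
  have : Nonempty (Fin k) := ⟨⟨0, by omega⟩⟩
  have hH : (μH[(k:ℝ)] : Measure (EuclideanSpace ℝ (Fin k))).IsAddHaarMeasure := by
    simpa using MeasureTheory.isAddHaarMeasure_hausdorffMeasure (E := EuclideanSpace ℝ (Fin k))
  set a := (μH[(k:ℝ)] : Measure (EuclideanSpace ℝ (Fin k))).toSphere univ with ha
  set b := (volume : Measure (EuclideanSpace ℝ (Fin n))).toSphere univ with hb
  have ha1 : a ≠ ⊤ := measure_ne_top _ _
  have hb1 : b ≠ ⊤ := measure_ne_top _ _
  have hb0 : b ≠ 0 := by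
    rw [hb, Measure.measure_univ_ne_zero]
    exact Measure.toSphere_ne_zero _
  have hr0 : (0:ℝ) ≤ (k:ℝ) / n := by positivity
  set c := a * (2 * b⁻¹ ^ ((k:ℝ) / n)) with hc
  have hc1 : c ≠ ⊤ := by
    refine ENNReal.mul_ne_top ha1 (ENNReal.mul_ne_top (by simp) ?_)
    exact ENNReal.rpow_ne_top_of_nonneg hr0 (ENNReal.inv_ne_top.2 hb0)
  refine ⟨c.toReal + 1, by positivity, ?_⟩
  rintro E A hA rfl hE ξ hne hd
  obtain ⟨d, hdd⟩ := kp_slice n k A ξ hne hd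
  have hmeas : MeasurableSet ((fun y => √(d ^ 2 + y ^ 2)) ⁻¹' A) :=
    (by fun_prop : Measurable fun y : ℝ => √(d ^ 2 + y ^ 2)) hA
  rw [hdd, kp_polar _ _ hmeas, ← ha, finrank_euclideanSpace_fin]
  rw [kp_polar _ _ hA, ← hb, finrank_euclideanSpace_fin] at hE ⊢
  set M := ∫⁻ y in Ioi (0:ℝ), ENNReal.ofReal (y ^ (n - 1)) * A.indicator 1 y with hM
  have hMfin : M ≠ ⊤ := by
    intro h
    rw [h, ENNReal.mul_top hb0] at hE
    exact lt_irrefl _ hE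
  have h1 := (kp_change k hk d A).trans (kp_oned n k hk (by omega) A hA hMfin)
  have h2 : M = b⁻¹ * (b * M) := by
    rw [← mul_assoc, ENNReal.inv_mul_cancel hb0 hb1, one_mul]
  calc _ ≤ a * (2 * M ^ ((k:ℝ) / n)) := by gcongr
    _ = c * (b * M) ^ ((k:ℝ) / n) := by
        conv_lhs => rw [h2, ENNReal.mul_rpow_of_nonneg _ _ hr0]
        rw [hc]; ring
    _ ≤ _ := by
        gcongr
        calc c = ENNReal.ofReal c.toReal := (ENNReal.ofReal_toReal hc1).symm
          _ ≤ _ := ENNReal.ofReal_le_ofReal (by linarith)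
end

section
/- Let n ≥ 2. There exists a constant C > 0, depending only on n, such that for every radial Lebesgue-measurable set E ⊆ ℝⁿ of finite Lebesgue measure and every line (1-dimensional affine subspace) ℓ ⊆ ℝⁿ, the 1-dimensional Hausdorff measure of E ∩ ℓ satisfies μH^1(E ∩ ℓ) ≤ C · (λ(E))^{1/n}, where λ denotes Lebesgue measure on ℝⁿ. -/
open MeasureTheory Real Set

lemma radial_vol (n : ℕ) (hn : 2 ≤ n) (A : Set ℝ) (hA : MeasurableSet A) :
    volume {x : EuclideanSpace ℝ (Fin n) | ‖x‖ ∈ A} =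
      (volume : Measure (EuclideanSpace ℝ (Fin n))).toSphere univ *
        ∫⁻ r in A ∩ Ioi 0, ENNReal.ofReal (r ^ (n - 1)) := by
  have : Nonempty (Fin n) := ⟨⟨0, by omega⟩⟩
  set μ := (volume : Measure (EuclideanSpace ℝ (Fin n))) with hμ
  have hE : MeasurableSet {x : EuclideanSpace ℝ (Fin n) | ‖x‖ ∈ A} := measurable_norm hA
  have hmp := μ.measurePreserving_homeomorphUnitSphereProd
  rw [finrank_euclideanSpace_fin] at hmp
  have hA' : MeasurableSet ((↑) ⁻¹' A : Set (Ioi (0:ℝ))) := measurable_subtype_coe hA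
  have h1 := hmp.measure_preimage
    (s := (univ : Set (Metric.sphere (0 : EuclideanSpace ℝ (Fin n)) 1)) ×ˢ
      ((↑) ⁻¹' A : Set (Ioi (0:ℝ)))) (MeasurableSet.univ.prod hA').nullMeasurableSet
  rw [Measure.prod_prod, comap_subtype_coe_apply (measurableSet_singleton _).compl,
    Measure.volumeIoiPow, withDensity_apply _ hA',
    setLIntegral_subtype measurableSet_Ioi _ fun a : ℝ ↦ ENNReal.ofReal (a ^ (n - 1)),
    Subtype.image_preimage_coe, inter_comm] at h1
  rw [← h1, ← measure_sdiff_null (s := {x : EuclideanSpace ℝ (Fin n) | ‖x‖ ∈ A})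
    (measure_singleton (μ := μ) 0)]
  congr 1
  ext x
  simp only [mem_sdiff, mem_ofPred_eq, mem_image, mem_preimage, mem_prod, mem_univ, true_and,
    homeomorphUnitSphereProd_apply_snd_coe, Subtype.exists, mem_compl_iff, mem_singleton_iff]
  constructor
  · rintro ⟨h, h0⟩
    exact ⟨x, h0, h, rfl⟩
  · rintro ⟨y, h0, h, rfl⟩
    exact ⟨h, h0⟩

lemma bathtub (n : ℕ) (hn : 2 ≤ n) (T : Set ℝ) (hT : MeasurableSet T) (hT0 : T ⊆ Ioi 0) :
    volume T ≤ 2 * (∫⁻ t in T, ENNReal.ofReal (t ^ (n - 1))) ^ ((1 : ℝ) / n) := by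
  refine ENNReal.le_of_forall_nnreal_lt fun m hm => ?_
  set I := ∫⁻ t in T, ENNReal.ofReal (t ^ (n - 1)) with hI
  set a : NNReal := m / 2 with ha
  have hma : m = a + a := by rw [ha, add_halves]
  have h1 : (a : ENNReal) ≤ volume (T ∩ Ioi (a:ℝ)) := by
    have h2 : volume T ≤ volume (T ∩ Ioi (a:ℝ)) + volume (Ioc (0:ℝ) a) := by
      refine (measure_mono ?_).trans (measure_union_le _ _)
      intro t ht
      rcases lt_or_ge (a:ℝ) t with h | h
      · exact Or.inl ⟨ht, h⟩
      · exact Or.inr ⟨hT0 ht, h⟩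
    rw [Real.volume_Ioc, sub_zero, ENNReal.ofReal_coe_nnreal] at h2
    have h3 : (a : ENNReal) + a ≤ volume (T ∩ Ioi (a:ℝ)) + a := by
      refine le_trans ?_ h2
      rw [← ENNReal.coe_add, ← hma]
      exact hm.le
    exact (ENNReal.add_le_add_iff_right ENNReal.coe_ne_top).1 h3
  have h4 : (a : ENNReal) ^ n ≤ I := by
    calc (a : ENNReal) ^ n = a ^ (n - 1) * a := by rw [← pow_succ]; congr 1; omega
      _ ≤ a ^ (n - 1) * volume (T ∩ Ioi (a:ℝ)) := by gcongr
      _ = ∫⁻ t in T ∩ Ioi (a:ℝ), (a : ENNReal) ^ (n - 1) := by rw [setLIntegral_const]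
      _ ≤ ∫⁻ t in T ∩ Ioi (a:ℝ), ENNReal.ofReal (t ^ (n - 1)) := by
          refine setLIntegral_mono' (hT.inter measurableSet_Ioi) ?_
          rintro t ⟨-, ht⟩
          have ht' : (a:ℝ) < t := ht
          rw [ENNReal.ofReal_pow (a.2.trans ht'.le)]
          gcongr
          rw [← ENNReal.ofReal_coe_nnreal]
          exact ENNReal.ofReal_le_ofReal ht'.le
      _ ≤ I := lintegral_mono_set inter_subset_left
  have h5 : (a : ENNReal) ≤ I ^ ((1:ℝ)/n) := by
    rw [one_div, ENNReal.le_rpow_inv_iff (by positivity), ENNReal.rpow_natCast]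
    exact h4
  rw [hma, ENNReal.coe_add, two_mul]
  exact add_le_add h5 h5

lemma change_var (n : ℕ) (hn : 2 ≤ n) (s : ℝ) (A : Set ℝ) (hA : MeasurableSet A) :
    ∫⁻ t in {t : ℝ | 0 < t ∧ √(s ^ 2 + t ^ 2) ∈ A}, ENNReal.ofReal (t ^ (n - 1)) ≤
      ∫⁻ r in A ∩ Ioi 0, ENNReal.ofReal (r ^ (n - 1)) := by
  set T := {t : ℝ | 0 < t ∧ √(s ^ 2 + t ^ 2) ∈ A} with hTdef
  have hT : MeasurableSet T := measurableSet_Ioi.inter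
    ((by fun_prop : Measurable fun t : ℝ => √(s ^ 2 + t ^ 2)) hA)
  have hpos : ∀ t ∈ T, 0 < s ^ 2 + t ^ 2 := fun t ht => by have := ht.1; positivity
  have hder : ∀ t ∈ T, HasDerivWithinAt (fun t : ℝ => √(s ^ 2 + t ^ 2))
      (t / √(s ^ 2 + t ^ 2)) T t := by
    intro t ht
    have h := (((hasDerivAt_pow 2 t).const_add (s ^ 2)).sqrt (hpos t ht).ne').hasDerivWithinAt
      (s := T)
    rw [Nat.cast_ofNat, show (2 - 1 : ℕ) = 1 from rfl, pow_one,
      mul_div_mul_left _ _ two_ne_zero] at h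
    exact h
  have hinj : InjOn (fun t : ℝ => √(s ^ 2 + t ^ 2)) T := by
    intro t ht u hu h
    have h' := (Real.sqrt_inj (hpos t ht).le (hpos u hu).le).1 h
    exact (pow_left_inj₀ ht.1.le hu.1.le two_ne_zero).1 (by linarith)
  have hsub : (fun t : ℝ => √(s ^ 2 + t ^ 2)) '' T ⊆ A ∩ Ioi 0 := by
    rintro _ ⟨t, ht, rfl⟩
    exact ⟨ht.2, Real.sqrt_pos.2 (hpos t ht)⟩
  refine le_trans ?_ (lintegral_mono_set hsub)
  rw [lintegral_image_eq_lintegral_abs_deriv_mul hT hder hinj]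
  refine setLIntegral_mono' hT fun t ht => ?_
  have hr := Real.sqrt_pos.2 (hpos t ht)
  have ht0 : 0 < t := ht.1
  have htr : t ≤ √(s ^ 2 + t ^ 2) := Real.le_sqrt_of_sq_le (by nlinarith [sq_nonneg s])
  rw [← ENNReal.ofReal_mul (abs_nonneg _)]
  refine ENNReal.ofReal_le_ofReal ?_
  rw [abs_of_pos (by positivity)]
  obtain ⟨k, rfl⟩ : ∃ k, n = k + 2 := ⟨n - 2, by omega⟩
  have e : k + 2 - 1 = k + 1 := by omega
  rw [e]
  have : t / √(s ^ 2 + t ^ 2) * √(s ^ 2 + t ^ 2) ^ (k + 1) = t * √(s ^ 2 + t ^ 2) ^ k := by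
    field_simp
    ring
  rw [this, pow_succ, mul_comm]
  gcongr

lemma vol_sym (s : ℝ) (A : Set ℝ) :
    volume {t : ℝ | √(s ^ 2 + t ^ 2) ∈ A} ≤
      2 * volume {t : ℝ | 0 < t ∧ √(s ^ 2 + t ^ 2) ∈ A} := by
  set T := {t : ℝ | 0 < t ∧ √(s ^ 2 + t ^ 2) ∈ A} with hTdef
  have h : {t : ℝ | √(s ^ 2 + t ^ 2) ∈ A} ⊆ (T ∪ Neg.neg ⁻¹' T) ∪ {0} := by
    intro t ht
    rcases lt_trichotomy t 0 with h | h | h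
    · refine Or.inl (Or.inr ⟨by simpa using h, by simpa using ht⟩)
    · exact Or.inr h
    · exact Or.inl (Or.inl ⟨h, ht⟩)
  refine (measure_mono h).trans ((measure_union_le _ _).trans ?_)
  rw [Real.volume_singleton, add_zero]
  refine (measure_union_le _ _).trans ?_
  rw [Measure.measure_preimage_neg, two_mul]

lemma line_param (n : ℕ) (ℓ : AffineSubspace ℝ (EuclideanSpace ℝ (Fin n)))
    (hne : (ℓ : Set (EuclideanSpace ℝ (Fin n))).Nonempty)
    (hd : Module.finrank ℝ ℓ.direction = 1) :
    ∃ p u : EuclideanSpace ℝ (Fin n), ‖u‖ = 1 ∧ inner ℝ p u = 0 ∧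
      ∀ x ∈ ℓ, ∃ t : ℝ, x = p + t • u := by
  obtain ⟨q, hq⟩ := hne
  obtain ⟨v, hv0, hv⟩ := finrank_eq_one_iff'.1 hd
  have hv0' : (v : EuclideanSpace ℝ (Fin n)) ≠ 0 := by simpa using hv0
  have hvn : ‖(v : EuclideanSpace ℝ (Fin n))‖ ≠ 0 := norm_ne_zero_iff.2 hv0'
  set u : EuclideanSpace ℝ (Fin n) := ‖(v : EuclideanSpace ℝ (Fin n))‖⁻¹ • v with hu
  have hu1 : ‖u‖ = 1 := by rw [hu, norm_smul, norm_inv, norm_norm, inv_mul_cancel₀ hvn]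
  refine ⟨q - (inner ℝ q u : ℝ) • u, u, hu1, ?_, ?_⟩
  · rw [inner_sub_left, inner_smul_left, real_inner_self_eq_norm_sq, hu1]
    simp
  · intro x hx
    obtain ⟨c, hc⟩ := hv ⟨x -ᵥ q, AffineSubspace.vsub_mem_direction hx hq⟩
    have hc' : c • (v : EuclideanSpace ℝ (Fin n)) = x - q := congrArg Subtype.val hc
    refine ⟨inner ℝ q u + c * ‖(v : EuclideanSpace ℝ (Fin n))‖, ?_⟩
    have h2 : (c * ‖(v : EuclideanSpace ℝ (Fin n))‖) • u = x - q := by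
      rw [hu, smul_smul, mul_assoc, mul_inv_cancel₀ hvn, mul_one, hc']
    rw [add_smul, h2]
    abel

theorem euclidean_xray_endpoint (n : ℕ) (hn : 2 ≤ n) :
    ∃ C : ℝ, 0 < C ∧
      ∀ (E : Set (EuclideanSpace ℝ (Fin n))) (A : Set ℝ), MeasurableSet A →
        E = {x : EuclideanSpace ℝ (Fin n) | ‖x‖ ∈ A} → volume E < ⊤ →
        ∀ ℓ : AffineSubspace ℝ (EuclideanSpace ℝ (Fin n)),
          (ℓ : Set (EuclideanSpace ℝ (Fin n))).Nonempty →
          Module.finrank ℝ ℓ.direction = 1 →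
          μH[(1 : ℝ)] (E ∩ (ℓ : Set (EuclideanSpace ℝ (Fin n)))) ≤
            ENNReal.ofReal C * (volume E) ^ ((1 : ℝ) / n) := by
  have : Nonempty (Fin n) := ⟨⟨0, by omega⟩⟩
  set κ := (volume : Measure (EuclideanSpace ℝ (Fin n))).toSphere univ with hκ
  have hκ0 : κ ≠ 0 := by
    rw [hκ, Ne, Measure.measure_univ_eq_zero]
    exact Measure.toSphere_ne_zero _
  have hκt : κ ≠ ⊤ := measure_ne_top _ _
  set c : ENNReal := 2 * (2 * (κ⁻¹) ^ ((1:ℝ)/n)) with hc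
  have hn0 : (0:ℝ) ≤ 1 / n := by positivity
  have hct : c ≠ ⊤ := by
    refine ENNReal.mul_ne_top (by simp) (ENNReal.mul_ne_top (by simp) ?_)
    exact ENNReal.rpow_ne_top_of_nonneg hn0 (ENNReal.inv_ne_top.2 hκ0)
  have hc0 : c ≠ 0 := by
    refine mul_ne_zero (by simp) (mul_ne_zero (by simp) ?_)
    exact (ENNReal.rpow_pos (ENNReal.inv_pos.2 hκt) (ENNReal.inv_ne_top.2 hκ0)).ne'
  refine ⟨c.toReal, ENNReal.toReal_pos hc0 hct, ?_⟩
  intro E A hA hE _ ℓ hne hd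
  rw [ENNReal.ofReal_toReal hct]
  obtain ⟨p, u, hu, hpu, hl⟩ := line_param n ℓ hne hd
  set γ : ℝ → EuclideanSpace ℝ (Fin n) := fun t => p + t • u with hγ
  have hiso : Isometry γ := Isometry.of_dist_eq fun a b => by
    rw [hγ, dist_eq_norm, dist_eq_norm]
    simp only [add_sub_add_left_eq_sub, ← sub_smul]
    rw [norm_smul, hu, mul_one]
  have hnorm : ∀ t, ‖γ t‖ = √(‖p‖ ^ 2 + t ^ 2) := by
    intro t
    symm
    rw [Real.sqrt_eq_iff_mul_self_eq (by positivity) (norm_nonneg _), ← sq, hγ]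
    simp only []
    rw [norm_add_sq_real, inner_smul_right, hpu, norm_smul, hu]
    simp
  have hsub : E ∩ (ℓ : Set (EuclideanSpace ℝ (Fin n))) ⊆
      γ '' {t : ℝ | √(‖p‖ ^ 2 + t ^ 2) ∈ A} := by
    rintro x ⟨hxE, hxl⟩
    obtain ⟨t, rfl⟩ := hl x hxl
    refine ⟨t, ?_, rfl⟩
    rw [hE] at hxE
    have h : ‖γ t‖ ∈ A := hxE
    rw [hnorm] at h
    exact h
  have hT : MeasurableSet {t : ℝ | 0 < t ∧ √(‖p‖ ^ 2 + t ^ 2) ∈ A} := measurableSet_Ioi.inter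
    ((by fun_prop : Measurable fun t : ℝ => √(‖p‖ ^ 2 + t ^ 2)) hA)
  set J := ∫⁻ r in A ∩ Ioi 0, ENNReal.ofReal (r ^ (n - 1)) with hJ
  have hvol : volume E = κ * J := by rw [hE]; exact radial_vol n hn A hA
  have hJE : J = κ⁻¹ * volume E := by
    rw [hvol, ← mul_assoc, ENNReal.inv_mul_cancel hκ0 hκt, one_mul]
  calc μH[(1 : ℝ)] (E ∩ (ℓ : Set (EuclideanSpace ℝ (Fin n))))
      ≤ μH[(1 : ℝ)] (γ '' {t : ℝ | √(‖p‖ ^ 2 + t ^ 2) ∈ A}) := measure_mono hsub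
    _ = volume {t : ℝ | √(‖p‖ ^ 2 + t ^ 2) ∈ A} := by
        rw [hiso.hausdorffMeasure_image (Or.inl zero_le_one), hausdorffMeasure_real]
    _ ≤ 2 * volume {t : ℝ | 0 < t ∧ √(‖p‖ ^ 2 + t ^ 2) ∈ A} := vol_sym _ _
    _ ≤ 2 * (2 * J ^ ((1:ℝ)/n)) := by
        gcongr
        refine (bathtub n hn _ hT fun t ht => ht.1).trans ?_
        gcongr
        exact change_var n hn _ A hA
    _ = c * volume E ^ ((1:ℝ)/n) := by
        rw [hJE, ENNReal.mul_rpow_of_nonneg _ _ hn0, hc]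
        ring
end

section
/- Let p, q, r be unit vectors in ℝ^{n+1} (points of Sⁿ) such that the tangential components of p and r at q are orthogonal, i.e. ⟨p - ⟨p,q⟩q, r - ⟨r,q⟩q⟩ = 0. Set a = arccos⟨p,q⟩, b = arccos⟨q,r⟩, h = arccos⟨p,r⟩ (the geodesic side lengths of the triangle with right angle at q). Then cos h = cos a · cos b; equivalently, sin²(h/2) = sin²(a/2) + sin²(b/2) - 2·sin²(a/2)·sin²(b/2). -/
open Real RealInnerProductSpace

theorem spherical_pythagoras (n : ℕ) (p q r : EuclideanSpace ℝ (Fin (n + 1)))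
    (hp : ‖p‖ = 1) (hq : ‖q‖ = 1) (hr : ‖r‖ = 1)
    (hperp : ⟪p - ⟪p, q⟫ • q, r - ⟪r, q⟫ • q⟫ = (0 : ℝ)) :
    Real.cos (Real.arccos ⟪p, r⟫) =
        Real.cos (Real.arccos ⟪p, q⟫) * Real.cos (Real.arccos ⟪q, r⟫) ∧
      Real.sin (Real.arccos ⟪p, r⟫ / 2) ^ 2 =
        Real.sin (Real.arccos ⟪p, q⟫ / 2) ^ 2 + Real.sin (Real.arccos ⟪q, r⟫ / 2) ^ 2 -
          2 * Real.sin (Real.arccos ⟪p, q⟫ / 2) ^ 2 * Real.sin (Real.arccos ⟪q, r⟫ / 2) ^ 2 := by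
  have hc : ∀ x y : EuclideanSpace ℝ (Fin (n + 1)), ‖x‖ = 1 → ‖y‖ = 1 →
      Real.cos (Real.arccos (inner ℝ x y)) = inner ℝ x y := by
    intro x y hx hy
    have h := abs_real_inner_le_norm x y
    rw [hx, hy, mul_one, abs_le] at h
    exact Real.cos_arccos h.1 h.2
  have hs : ∀ t : ℝ, Real.sin (t / 2) ^ 2 = 1 / 2 - Real.cos t / 2 := by
    intro t
    rw [Real.sin_sq_eq_half_sub]
    congr 3
    ring
  have key : (inner ℝ p r : ℝ) = inner ℝ p q * inner ℝ q r := by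
    simp only [inner_sub_left, inner_sub_right, real_inner_smul_left, real_inner_smul_right,
      real_inner_self_eq_norm_sq, hq] at hperp
    rw [real_inner_comm q r] at hperp
    linarith
  rw [hs, hs, hs, hc p r hp hr, hc p q hp hq, hc q r hq hr, key]
  refine ⟨rfl, ?_⟩
  ring
end

section
/- Let η₁, η₂ > 0 and p ≥ 1. Then there exists a constant K > 0, depending only on p, η₁ and η₂, such that for all real numbers 0 < a < b < 1, ∫_a^b t^{η₁/2 - 1} (1 - t)^{η₂/2 - 1} dt ≤ K · ( ∫_a^b t^{p·η₁/2 - 1} (1 - t)^{p·η₂/2 - 1} dt )^{1/p}. -/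
open MeasureTheory Real Set

lemma aux_pow_int (s c d : ℝ) (hs : 0 < s) (hc : 0 < c) (hcd : c < d) :
    ∫⁻ t in Set.Ioo c d, ENNReal.ofReal (t ^ (s - 1)) = ENNReal.ofReal ((d ^ s - c ^ s) / s) := by
  have h0 : (0:ℝ) ∉ Set.uIcc c d := by
    rw [Set.uIcc_of_le hcd.le]; intro h; linarith [h.1]
  have hI : IntervalIntegrable (fun t : ℝ => t ^ (s - 1)) volume c d :=
    intervalIntegral.intervalIntegrable_rpow (Or.inr h0)
  have h1 := integral_rpow (a := c) (b := d) (r := s - 1) (Or.inl (by linarith))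
  rw [sub_add_cancel, intervalIntegral.integral_of_le hcd.le] at h1
  rw [← h1, setLIntegral_congr Ioo_ae_eq_Ioc]
  rw [ofReal_integral_eq_lintegral_ofReal]
  · exact (intervalIntegrable_iff_integrableOn_Ioc_of_le hcd.le).1 hI
  · filter_upwards [ae_restrict_mem measurableSet_Ioc] with t ht
    exact Real.rpow_nonneg (by linarith [ht.1]) _

lemma aux_bounds (r t : ℝ) (h0 : 0 < t) (h1 : t ≤ 1 / 2) :
    (1 - t) ^ r ≤ (1 / 2 : ℝ) ^ (-|r|) ∧ 1 ≤ (1 / 2 : ℝ) ^ (-|r|) * (1 - t) ^ r := by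
  have a1 : (1 - t) ^ r ≤ (1 - t) ^ (-|r|) :=
    Real.rpow_le_rpow_of_exponent_ge (by linarith) (by linarith) (neg_abs_le r)
  have a2 : (1 - t) ^ (-|r|) ≤ (1 / 2 : ℝ) ^ (-|r|) :=
    Real.rpow_le_rpow_of_nonpos (by norm_num) (by linarith) (by simp)
  have a3 : (1 - t) ^ |r| ≤ (1 - t) ^ r :=
    Real.rpow_le_rpow_of_exponent_ge (by linarith) (by linarith) (le_abs_self r)
  have a4 : (1 / 2 : ℝ) ^ |r| ≤ (1 - t) ^ |r| :=
    Real.rpow_le_rpow (by norm_num) (by linarith) (abs_nonneg r)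
  refine ⟨a1.trans a2, ?_⟩
  have h : (1 / 2 : ℝ) ^ (-|r|) * (1 / 2 : ℝ) ^ |r| = 1 := by
    rw [← Real.rpow_add (by norm_num)]; simp
  refine h.symm.le.trans ?_
  exact mul_le_mul_of_nonneg_left (a4.trans a3) (by positivity)

lemma aux_super (s p c d : ℝ) (hs : 0 < s) (hp : 1 ≤ p) (hc : 0 < c) (hcd : c < d) :
    d ^ s - c ^ s ≤ (d ^ (p * s) - c ^ (p * s)) ^ (1 / p) := by
  have hp0 : 0 < p := by linarith
  have hlt : c ^ s ≤ d ^ s := Real.rpow_le_rpow hc.le hcd.le hs.le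
  have hx : 0 ≤ d ^ s - c ^ s := by linarith
  have h := Real.add_rpow_le_rpow_add hx (Real.rpow_nonneg hc.le s) hp
  rw [sub_add_cancel, ← Real.rpow_mul hc.le, ← Real.rpow_mul (hc.trans hcd).le, mul_comm s p] at h
  calc d ^ s - c ^ s = ((d ^ s - c ^ s) ^ p) ^ (1 / p) := by
        rw [← Real.rpow_mul hx, mul_one_div_cancel hp0.ne', Real.rpow_one]
    _ ≤ _ := Real.rpow_le_rpow (by positivity) (by linarith) (by positivity)

lemma aux_left (η₁ η₂ p : ℝ) (hη₁ : 0 < η₁) (hp : 1 ≤ p) :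
    ∃ K : ℝ, 0 < K ∧
      ∀ a b : ℝ, 0 < a → b ≤ 1 / 2 →
        (∫⁻ t in Set.Ioo a b,
            ENNReal.ofReal (t ^ (η₁ / 2 - 1) * (1 - t) ^ (η₂ / 2 - 1))) ≤
        ENNReal.ofReal K *
          (∫⁻ t in Set.Ioo a b,
            ENNReal.ofReal (t ^ (p * η₁ / 2 - 1) * (1 - t) ^ (p * η₂ / 2 - 1))) ^ (1 / p) := by
  have hp0 : 0 < p := by linarith
  set A : ℝ := (1 / 2 : ℝ) ^ (-|η₂ / 2 - 1|) with hA
  set B : ℝ := (1 / 2 : ℝ) ^ (-|p * η₂ / 2 - 1|) with hB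
  have hA0 : 0 < A := by positivity
  have hB0 : 0 < B := by positivity
  have hq : 0 < p * η₁ / 2 := by positivity
  have hs : 0 < η₁ / 2 := by positivity
  refine ⟨A / (η₁ / 2) * (p * η₁ / 2 * B) ^ (1 / p), by positivity, ?_⟩
  intro a b ha hb
  rcases le_or_gt b a with hab | hab
  · simp [Set.Ioo_eq_empty_of_le hab]
  set I := ∫⁻ t in Set.Ioo a b,
            ENNReal.ofReal (t ^ (p * η₁ / 2 - 1) * (1 - t) ^ (p * η₂ / 2 - 1)) with hI
  have h1 : (∫⁻ t in Set.Ioo a b,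
      ENNReal.ofReal (t ^ (η₁ / 2 - 1) * (1 - t) ^ (η₂ / 2 - 1)))
      ≤ ENNReal.ofReal A * ENNReal.ofReal ((b ^ (η₁ / 2) - a ^ (η₁ / 2)) / (η₁ / 2)) := by
    rw [← aux_pow_int _ a b hs ha hab, ← lintegral_const_mul' _ _ ENNReal.ofReal_ne_top]
    refine setLIntegral_mono' measurableSet_Ioo fun t ht => ?_
    have ht0 : 0 < t := ha.trans ht.1
    rw [← ENNReal.ofReal_mul hA0.le, mul_comm A]
    exact ENNReal.ofReal_le_ofReal (mul_le_mul_of_nonneg_left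
      (aux_bounds _ t ht0 (ht.2.le.trans hb)).1 (Real.rpow_nonneg ht0.le _))
  have h2 : ENNReal.ofReal ((b ^ (p * η₁ / 2) - a ^ (p * η₁ / 2)) / (p * η₁ / 2))
      ≤ ENNReal.ofReal B * I := by
    rw [← aux_pow_int _ a b hq ha hab, hI, ← lintegral_const_mul' _ _ ENNReal.ofReal_ne_top]
    refine setLIntegral_mono' measurableSet_Ioo fun t ht => ?_
    have ht0 : 0 < t := ha.trans ht.1
    rw [← ENNReal.ofReal_mul hB0.le]
    apply ENNReal.ofReal_le_ofReal
    have := mul_le_mul_of_nonneg_left (aux_bounds (p * η₂ / 2 - 1) t ht0 (ht.2.le.trans hb)).2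
      (Real.rpow_nonneg ht0.le (p * η₁ / 2 - 1))
    rw [mul_one] at this
    refine this.trans (le_of_eq ?_)
    rw [hB]; ring
  have h3 := aux_super (η₁ / 2) p a b hs hp ha hab
  rw [← mul_div_assoc] at h3
  set D := b ^ (p * η₁ / 2) - a ^ (p * η₁ / 2) with hD
  have hD0 : 0 ≤ D := sub_nonneg.2 (Real.rpow_le_rpow ha.le hab.le hq.le)
  have h4 : ENNReal.ofReal D ≤ ENNReal.ofReal (p * η₁ / 2 * B) * I := by
    rw [ENNReal.ofReal_mul hq.le, mul_assoc]
    calc ENNReal.ofReal D = ENNReal.ofReal (p * η₁ / 2) * ENNReal.ofReal (D / (p * η₁ / 2)) := by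
          rw [← ENNReal.ofReal_mul hq.le, mul_div_cancel₀ _ hq.ne']
      _ ≤ _ := by gcongr
  calc _ ≤ _ := h1
    _ = ENNReal.ofReal (A / (η₁ / 2)) * ENNReal.ofReal (b ^ (η₁ / 2) - a ^ (η₁ / 2)) := by
        rw [← ENNReal.ofReal_mul hA0.le, ← ENNReal.ofReal_mul (by positivity)]
        congr 1; ring
    _ ≤ ENNReal.ofReal (A / (η₁ / 2)) * ENNReal.ofReal (D ^ (1 / p)) := by gcongr
    _ = ENNReal.ofReal (A / (η₁ / 2)) * ENNReal.ofReal D ^ (1 / p) := by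
        rw [ENNReal.ofReal_rpow_of_nonneg hD0 (by positivity)]
    _ ≤ ENNReal.ofReal (A / (η₁ / 2)) * (ENNReal.ofReal (p * η₁ / 2 * B) * I) ^ (1 / p) := by
        gcongr
    _ = _ := by
        rw [ENNReal.mul_rpow_of_nonneg _ _ (by positivity),
          ENNReal.ofReal_rpow_of_nonneg (by positivity) (by positivity), ← mul_assoc,
          ← ENNReal.ofReal_mul (by positivity)]

lemma aux_refl (u v a b : ℝ) :
    (∫⁻ t in Set.Ioo a b, ENNReal.ofReal (t ^ u * (1 - t) ^ v)) =
    ∫⁻ t in Set.Ioo (1 - b) (1 - a), ENNReal.ofReal (t ^ v * (1 - t) ^ u) := by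
  have hm : MeasurePreserving (fun t : ℝ => 1 - t) volume volume :=
    Measure.measurePreserving_sub_left volume 1
  have he : MeasurableEmbedding (fun t : ℝ => 1 - t) :=
    (Homeomorph.subLeft (1:ℝ)).measurableEmbedding
  rw [← hm.setLIntegral_comp_preimage_emb he]
  simp [mul_comm]

theorem appell_inequality_spherical (η₁ η₂ p : ℝ) (hη₁ : 0 < η₁) (hη₂ : 0 < η₂) (hp : 1 ≤ p) :
    ∃ K : ℝ, 0 < K ∧
      ∀ a b : ℝ, 0 < a → a < b → b < 1 →
        (∫⁻ t in Set.Ioo a b,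
            ENNReal.ofReal (t ^ (η₁ / 2 - 1) * (1 - t) ^ (η₂ / 2 - 1))) ≤
        ENNReal.ofReal K *
          (∫⁻ t in Set.Ioo a b,
            ENNReal.ofReal (t ^ (p * η₁ / 2 - 1) * (1 - t) ^ (p * η₂ / 2 - 1))) ^ (1 / p) := by
  have hp0 : 0 < p := by linarith
  obtain ⟨K₁, hK₁, H₁⟩ := aux_left η₁ η₂ p hη₁ hp
  obtain ⟨K₂, hK₂, H₂⟩ := aux_left η₂ η₁ p hη₂ hp
  refine ⟨K₁ + K₂, by positivity, ?_⟩
  intro a b ha hab hb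
  have e1 := H₁ a (min b (1 / 2)) ha (min_le_right _ _)
  have e2 := H₂ (1 - b) (1 - max a (1 / 2)) (by linarith)
    (by linarith [le_max_right a (1 / 2 : ℝ)])
  rw [← aux_refl, ← aux_refl] at e2
  have s1 : Set.Ioo a (min b (1 / 2)) ⊆ Set.Ioo a b := Set.Ioo_subset_Ioo_right (min_le_left _ _)
  have s2 : Set.Ioo (max a (1 / 2)) b ⊆ Set.Ioo a b := Set.Ioo_subset_Ioo_left (le_max_left _ _)
  have hsub : Set.Ioo a b ≤ᵐ[volume]
      (Set.Ioo a (min b (1 / 2)) ∪ Set.Ioo (max a (1 / 2)) b : Set ℝ) := by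
    have : ∀ᵐ t : ℝ, t ≠ 1 / 2 := by simp [ae_iff]
    filter_upwards [this] with t ht hmem
    rcases lt_or_gt_of_ne ht with h | h
    · exact Or.inl ⟨hmem.1, lt_min hmem.2 h⟩
    · exact Or.inr ⟨max_lt hmem.1 h, hmem.2⟩
  refine (lintegral_mono' (Measure.restrict_mono_ae hsub) le_rfl).trans ?_
  refine (lintegral_union_le _ _ _).trans ?_
  rw [ENNReal.ofReal_add hK₁.le hK₂.le, add_mul]
  refine add_le_add (e1.trans ?_) (e2.trans ?_)
  · gcongr
  · gcongr
end

section
/- Let η₁, η₂ > 0 and p ≥ 1. Then there exists a constant K > 0, depending only on p, η₁ and η₂, such that for all real numbers 0 < a < b < ∞, ∫_a^b t^{(η₁ - 1)/2} (1 + t)^{(η₂ - 1)/2} dt ≤ K · ( ∫_a^b t^{(p·η₁ - 1)/2} (1 + t)^{(p·η₂ - 1)/2} dt )^{1/p}. -/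
open MeasureTheory Real Set

lemma aux_cont (u v : ℝ) : ContinuousOn (fun t : ℝ => t ^ u * (1 + t) ^ v) (Ioi 0) := by
  intro t ht
  have ht : 0 < t := ht
  apply ContinuousAt.continuousWithinAt
  apply ContinuousAt.mul
  · exact continuousAt_id.rpow_const (Or.inl ht.ne')
  · exact (continuousAt_const.add continuousAt_id).rpow_const (Or.inl (by simp; linarith))

lemma aux_deriv_s18 (u v a x : ℝ) (ha : 0 < a) (hx : a ≤ x) :
    HasDerivAt (fun y => ∫ t in a..y, t ^ u * (1 + t) ^ v) (x ^ u * (1 + x) ^ v) x := by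
  have hx0 : 0 < x := ha.trans_le hx
  apply intervalIntegral.integral_hasDerivAt_right
  · apply ContinuousOn.intervalIntegrable
    apply (aux_cont u v).mono
    rw [uIcc_of_le hx]
    exact fun t ht => ha.trans_le ht.1
  · exact (aux_cont u v).stronglyMeasurableAtFilter isOpen_Ioi x hx0
  · exact (aux_cont u v).continuousAt (Ioi_mem_nhds hx0)

lemma aux_le (F F' G G' : ℝ → ℝ) (a b : ℝ) (hab : a ≤ b)
    (hF : ∀ x ∈ Icc a b, HasDerivAt F (F' x) x) (hG : ∀ x ∈ Icc a b, HasDerivAt G (G' x) x)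
    (h0 : F a ≤ G a) (h : ∀ x ∈ Icc a b, F' x ≤ G' x) : F b ≤ G b := by
  have : MonotoneOn (fun x => G x - F x) (Icc a b) := by
    apply monotoneOn_of_deriv_nonneg (convex_Icc a b)
    · exact fun x hx => ((hG x hx).sub (hF x hx)).continuousAt.continuousWithinAt
    · intro x hx
      exact ((hG x (interior_subset hx)).sub (hF x (interior_subset hx))).differentiableAt.differentiableWithinAt
    · intro x hx
      have := ((hG x (interior_subset hx)).sub (hF x (interior_subset hx))).deriv
      have h2 := h x (interior_subset hx)
      change 0 ≤ deriv (G - F) x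
      rw [this]; linarith
  have := this (left_mem_Icc.2 hab) (right_mem_Icc.2 hab) hab
  simp only at this
  linarith

lemma aux_lint (u v a b : ℝ) (ha : 0 < a) (hab : a < b) :
    (∫⁻ t in Set.Ioo a b, ENNReal.ofReal (t ^ u * (1 + t) ^ v)) =
      ENNReal.ofReal (∫ t in a..b, t ^ u * (1 + t) ^ v) := by
  rw [intervalIntegral.integral_of_le hab.le, integral_Ioc_eq_integral_Ioo,
    ofReal_integral_eq_lintegral_ofReal]
  · apply IntegrableOn.mono_set _ Ioo_subset_Icc_self
    apply ContinuousOn.integrableOn_Icc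
    exact (aux_cont u v).mono fun t ht => ha.trans_le ht.1
  · filter_upwards [ae_restrict_mem measurableSet_Ioo] with t ht
    have : 0 < t := ha.trans ht.1
    simp only [Pi.zero_apply]
    positivity

theorem appell_inequality_hyperbolic (η₁ η₂ p : ℝ) (hη₁ : 0 < η₁) (hη₂ : 0 < η₂) (hp : 1 ≤ p) :
    ∃ K : ℝ, 0 < K ∧
      ∀ a b : ℝ, 0 < a → a < b →
        (∫⁻ t in Set.Ioo a b,
            ENNReal.ofReal (t ^ ((η₁ - 1) / 2) * (1 + t) ^ ((η₂ - 1) / 2))) ≤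
        ENNReal.ofReal K *
          (∫⁻ t in Set.Ioo a b,
            ENNReal.ofReal (t ^ ((p * η₁ - 1) / 2) * (1 + t) ^ ((p * η₂ - 1) / 2))) ^ (1 / p) := by
  have hp0 : 0 < p := by linarith
  refine ⟨(p * (2 / η₁) ^ (p - 1)) ^ (1 / p), by positivity, fun a b ha hab => ?_⟩
  rw [aux_lint _ _ a b ha hab, aux_lint _ _ a b ha hab]
  have nn : ∀ u v x : ℝ, a ≤ x → 0 ≤ ∫ t in a..x, t ^ u * (1 + t) ^ v := by
    intro u v x hx
    apply intervalIntegral.integral_nonneg hx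
    intro t ht
    have : 0 < t := ha.trans_le ht.1
    positivity
  rw [ENNReal.ofReal_rpow_of_nonneg (nn _ _ b hab.le) (by positivity),
    ← ENNReal.ofReal_mul (by positivity)]
  apply ENNReal.ofReal_le_ofReal
  rw [← Real.mul_rpow (by positivity) (nn _ _ b hab.le), one_div,
    Real.le_rpow_inv_iff_of_pos (nn _ _ b hab.le) (mul_nonneg (by positivity) (nn _ _ b hab.le)) hp0]
  have key : ∀ x, a ≤ x → (∫ t in a..x, t ^ ((η₁ - 1) / 2) * (1 + t) ^ ((η₂ - 1) / 2)) ≤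
      (2 / η₁) * (x ^ (η₁ / 2) * (1 + x) ^ (η₂ / 2)) := by
    intro x hx
    refine aux_le (fun y => ∫ t in a..y, t ^ ((η₁ - 1) / 2) * (1 + t) ^ ((η₂ - 1) / 2))
      (fun y => y ^ ((η₁ - 1) / 2) * (1 + y) ^ ((η₂ - 1) / 2))
      (fun x => (2 / η₁) * (x ^ (η₁ / 2) * (1 + x) ^ (η₂ / 2)))
      (fun x => (2 / η₁) * ((1 * (η₁ / 2) * x ^ (η₁ / 2 - 1)) * (1 + x) ^ (η₂ / 2) +
        x ^ (η₁ / 2) * (1 * (η₂ / 2) * (1 + x) ^ (η₂ / 2 - 1)))) a x hx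
      (fun y hy => aux_deriv_s18 _ _ a y ha hy.1) ?_ ?_ ?_
    · intro y hy
      have hy0 : 0 < y := ha.trans_le hy.1
      exact (((hasDerivAt_id y).rpow_const (Or.inl hy0.ne')).mul
        (((hasDerivAt_id y).const_add 1).rpow_const
          (Or.inl (by simp only [id]; positivity)))).const_mul _
    · simp only [intervalIntegral.integral_same]
      positivity
    · intro y hy
      have hy0 : 0 < y := ha.trans_le hy.1
      have hy1 : 0 < 1 + y := by positivity
      have e1 : y ^ ((η₁ - 1) / 2) = y ^ (η₁ / 2 - 1) * y ^ (1 / 2 : ℝ) := by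
        rw [← Real.rpow_add hy0]; congr 1; ring
      have e2 : (1 + y) ^ (η₂ / 2) = (1 + y) ^ ((η₂ - 1) / 2) * (1 + y) ^ (1 / 2 : ℝ) := by
        rw [← Real.rpow_add hy1]; congr 1; ring
      have e3 : y ^ (1 / 2 : ℝ) ≤ (1 + y) ^ (1 / 2 : ℝ) :=
        Real.rpow_le_rpow hy0.le (by linarith) (by norm_num)
      calc y ^ ((η₁ - 1) / 2) * (1 + y) ^ ((η₂ - 1) / 2)
          = (y ^ (η₁ / 2 - 1) * (1 + y) ^ ((η₂ - 1) / 2)) * y ^ (1 / 2 : ℝ) := by rw [e1]; ring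
        _ ≤ (y ^ (η₁ / 2 - 1) * (1 + y) ^ ((η₂ - 1) / 2)) * (1 + y) ^ (1 / 2 : ℝ) := by gcongr
        _ = (2 / η₁) * ((1 * (η₁ / 2) * y ^ (η₁ / 2 - 1)) * (1 + y) ^ (η₂ / 2)) := by
            rw [e2]; field_simp
        _ ≤ _ := by
            gcongr
            have : 0 ≤ y ^ (η₁ / 2) * (1 * (η₂ / 2) * (1 + y) ^ (η₂ / 2 - 1)) := by positivity
            linarith
  refine aux_le (fun y => (∫ t in a..y, t ^ ((η₁ - 1) / 2) * (1 + t) ^ ((η₂ - 1) / 2)) ^ p)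
    _ (fun y => (p * (2 / η₁) ^ (p - 1)) *
      ∫ t in a..y, t ^ ((p * η₁ - 1) / 2) * (1 + t) ^ ((p * η₂ - 1) / 2)) _ a b hab.le
    (fun y hy => (aux_deriv_s18 _ _ a y ha hy.1).rpow_const (Or.inr hp))
    (fun y hy => (aux_deriv_s18 _ _ a y ha hy.1).const_mul _) ?_ ?_
  · simp [Real.zero_rpow hp0.ne']
  · intro y hy
    have hy0 : 0 < y := ha.trans_le hy.1
    have hy1 : 0 < 1 + y := by positivity
    have e0 := Real.rpow_le_rpow (nn _ _ y hy.1) (key y hy.1) (by linarith : 0 ≤ p - 1)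
    rw [Real.mul_rpow (by positivity) (by positivity), Real.mul_rpow (by positivity) (by positivity),
      ← Real.rpow_mul hy0.le, ← Real.rpow_mul hy1.le] at e0
    have e1 : y ^ ((p * η₁ - 1) / 2) = y ^ ((η₁ - 1) / 2) * y ^ (η₁ / 2 * (p - 1)) := by
      rw [← Real.rpow_add hy0]; congr 1; ring
    have e2 : (1 + y) ^ ((p * η₂ - 1) / 2) =
        (1 + y) ^ ((η₂ - 1) / 2) * (1 + y) ^ (η₂ / 2 * (p - 1)) := by
      rw [← Real.rpow_add hy1]; congr 1; ring
    rw [e1, e2]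
    refine (mul_le_mul_of_nonneg_left e0
      (by positivity : 0 ≤ y ^ ((η₁ - 1) / 2) * (1 + y) ^ ((η₂ - 1) / 2) * p)).trans (le_of_eq ?_)
    ring
end

section
/- Let η₁, η₂ > 0 and p ≥ 1. Then there exists a constant K > 0, depending only on p, η₁ and η₂, such that for all real numbers 0 < b < 1, ∫_0^b t^{η₁/2 - 1} (1 - t)^{η₂/2 - 1} dt ≤ K · ( ∫_0^b t^{p·η₁/2 - 1} (1 - t)^{p·η₂/2 - 1} dt )^{1/p}. -/
open MeasureTheory Real Set

lemma aux_pow (a b : ℝ) (ha : 0 < a) (hb : 0 < b) :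
    ∫⁻ t in Set.Ioo (0 : ℝ) b, ENNReal.ofReal (t ^ (a - 1)) = ENNReal.ofReal (b ^ a / a) := by
  have hi : IntervalIntegrable (fun x : ℝ => x ^ (a - 1)) volume 0 b :=
    intervalIntegral.intervalIntegrable_rpow' (by linarith)
  rw [intervalIntegrable_iff_integrableOn_Ioo_of_le hb.le] at hi
  rw [← ofReal_integral_eq_lintegral_ofReal hi]
  · rw [← integral_Ioc_eq_integral_Ioo, ← intervalIntegral.integral_of_le hb.le,
      integral_rpow (Or.inl (by linarith))]
    simp [Real.zero_rpow ha.ne']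
  · refine ae_restrict_of_forall_mem measurableSet_Ioo (fun x hx => ?_)
    exact Real.rpow_nonneg hx.1.le _

lemma aux_up (s t : ℝ) (h0 : 0 < t) (h1 : t ≤ 1 / 2) :
    (1 - t) ^ s ≤ (1 / 2 : ℝ) ^ (-|s|) := by
  calc (1 - t) ^ s ≤ (1 - t) ^ (-|s|) :=
        Real.rpow_le_rpow_of_exponent_ge (by linarith) (by linarith) (neg_abs_le s)
    _ ≤ _ := Real.rpow_le_rpow_of_nonpos (by norm_num) (by linarith) (by simp)

lemma aux_low (s t : ℝ) (h0 : 0 < t) (h1 : t ≤ 1 / 2) :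
    (1 / 2 : ℝ) ^ |s| ≤ (1 - t) ^ s := by
  calc (1 / 2 : ℝ) ^ |s| ≤ (1 - t) ^ |s| :=
        Real.rpow_le_rpow (by norm_num) (by linarith) (abs_nonneg s)
    _ ≤ _ := Real.rpow_le_rpow_of_exponent_ge (by linarith) (by linarith) (le_abs_self s)

lemma aux_beta (a c : ℝ) (ha : 0 < a) (hc : 0 < c) :
    ∫⁻ t in Set.Ioo (0 : ℝ) 1, ENNReal.ofReal (t ^ (a - 1) * (1 - t) ^ (c - 1)) =
      ENNReal.ofReal (ProbabilityTheory.beta a c) := by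
  have hB := ProbabilityTheory.beta_pos ha hc
  have h := ProbabilityTheory.lintegral_betaPDF_eq_one ha hc
  rw [ProbabilityTheory.lintegral_betaPDF] at h
  rw [← mul_one (ENNReal.ofReal (ProbabilityTheory.beta a c)), ← h,
    ← lintegral_const_mul' _ _ ENNReal.ofReal_ne_top]
  refine lintegral_congr fun t => ?_
  rw [← ENNReal.ofReal_mul hB.le]
  congr 1
  field_simp

lemma aux_upper (a c : ℝ) (ha : 0 < a) (hc : 0 < c) :
    ∃ C : ℝ, 0 < C ∧ ∀ b : ℝ, 0 < b → b < 1 →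
      (∫⁻ t in Set.Ioo (0 : ℝ) b, ENNReal.ofReal (t ^ (a - 1) * (1 - t) ^ (c - 1))) ≤
        ENNReal.ofReal (C * b ^ a) := by
  have hB := ProbabilityTheory.beta_pos ha hc
  set B := ProbabilityTheory.beta a c with hBdef
  have hM : (0 : ℝ) < (1 / 2 : ℝ) ^ (-|c - 1|) := by positivity
  set M := (1 / 2 : ℝ) ^ (-|c - 1|) with hMdef
  refine ⟨M / a + B * 2 ^ a, by positivity, fun b hb hb1 => ?_⟩
  have hba : 0 < b ^ a := by positivity
  rcases le_total b (1 / 2) with h | h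
  · calc _ ≤ ∫⁻ t in Set.Ioo (0 : ℝ) b, ENNReal.ofReal M * ENNReal.ofReal (t ^ (a - 1)) := by
          refine setLIntegral_mono' measurableSet_Ioo fun t ht => ?_
          rw [← ENNReal.ofReal_mul hM.le, mul_comm]
          refine ENNReal.ofReal_le_ofReal ?_
          exact mul_le_mul_of_nonneg_right (aux_up _ _ ht.1 (ht.2.le.trans h))
            (Real.rpow_nonneg ht.1.le _)
      _ = ENNReal.ofReal (M * (b ^ a / a)) := by
          rw [lintegral_const_mul' _ _ ENNReal.ofReal_ne_top, aux_pow a b ha hb,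
            ENNReal.ofReal_mul hM.le]
      _ ≤ _ := by
          refine ENNReal.ofReal_le_ofReal ?_
          have : 0 ≤ B * 2 ^ a * b ^ a := by positivity
          have e : M * (b ^ a / a) = M / a * b ^ a := by ring
          rw [e, add_mul]; linarith
  · calc _ ≤ ∫⁻ t in Set.Ioo (0 : ℝ) 1, ENNReal.ofReal (t ^ (a - 1) * (1 - t) ^ (c - 1)) :=
          lintegral_mono_set (Set.Ioo_subset_Ioo_right hb1.le)
      _ = ENNReal.ofReal B := aux_beta a c ha hc
      _ ≤ _ := by
          refine ENNReal.ofReal_le_ofReal ?_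
          have h2 : 1 ≤ (2 : ℝ) ^ a * b ^ a := by
            rw [← Real.mul_rpow (by norm_num) hb.le]
            exact Real.one_le_rpow (by linarith) ha.le
          have h3 : 0 ≤ M / a * b ^ a := by positivity
          nlinarith

lemma aux_lower (a c : ℝ) (ha : 0 < a) :
    ∃ D : ℝ, 0 < D ∧ ∀ b : ℝ, 0 < b → b < 1 →
      ENNReal.ofReal (D * b ^ a) ≤
      (∫⁻ t in Set.Ioo (0 : ℝ) b, ENNReal.ofReal (t ^ (a - 1) * (1 - t) ^ (c - 1))) := by
  have hM : (0 : ℝ) < (1 / 2 : ℝ) ^ |c - 1| := by positivity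
  set M := (1 / 2 : ℝ) ^ |c - 1| with hMdef
  refine ⟨M * (1 / 2) ^ a / a, by positivity, fun b hb hb1 => ?_⟩
  calc _ = ENNReal.ofReal (M * ((1 / 2 * b) ^ a / a)) := by
        rw [Real.mul_rpow (by norm_num) hb.le]; congr 1; ring
    _ = ∫⁻ t in Set.Ioo (0 : ℝ) (1 / 2 * b), ENNReal.ofReal M * ENNReal.ofReal (t ^ (a - 1)) := by
        rw [lintegral_const_mul' _ _ ENNReal.ofReal_ne_top, aux_pow a _ ha (by positivity),
            ENNReal.ofReal_mul hM.le]
    _ ≤ ∫⁻ t in Set.Ioo (0 : ℝ) (1 / 2 * b),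
          ENNReal.ofReal (t ^ (a - 1) * (1 - t) ^ (c - 1)) := by
        refine setLIntegral_mono' measurableSet_Ioo fun t ht => ?_
        rw [← ENNReal.ofReal_mul hM.le, mul_comm]
        refine ENNReal.ofReal_le_ofReal ?_
        exact mul_le_mul_of_nonneg_left (aux_low _ _ ht.1 (by linarith [ht.2]))
            (Real.rpow_nonneg ht.1.le _)
    _ ≤ _ := lintegral_mono_set (Set.Ioo_subset_Ioo_right (by linarith))

theorem gauss_inequality_spherical (η₁ η₂ p : ℝ) (hη₁ : 0 < η₁) (hη₂ : 0 < η₂) (hp : 1 ≤ p) :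
    ∃ K : ℝ, 0 < K ∧
      ∀ b : ℝ, 0 < b → b < 1 →
        (∫⁻ t in Set.Ioo (0 : ℝ) b,
            ENNReal.ofReal (t ^ (η₁ / 2 - 1) * (1 - t) ^ (η₂ / 2 - 1))) ≤
        ENNReal.ofReal K *
          (∫⁻ t in Set.Ioo (0 : ℝ) b,
            ENNReal.ofReal (t ^ (p * η₁ / 2 - 1) * (1 - t) ^ (p * η₂ / 2 - 1))) ^ (1 / p) := by
  have hp0 : 0 < p := by linarith
  obtain ⟨C, hC, hCu⟩ := aux_upper (η₁ / 2) (η₂ / 2) (by positivity) (by positivity)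
  obtain ⟨D, hD, hDl⟩ := aux_lower (p * η₁ / 2) (p * η₂ / 2) (by positivity)
  refine ⟨C / D ^ (1 / p), by positivity, fun b hb hb1 => ?_⟩
  refine (hCu b hb hb1).trans ?_
  refine le_trans (le_of_eq ?_)
    (mul_le_mul_right (ENNReal.rpow_le_rpow (hDl b hb hb1) (by positivity)) _)
  rw [ENNReal.ofReal_rpow_of_pos (by positivity), ← ENNReal.ofReal_mul (by positivity),
    Real.mul_rpow hD.le (by positivity), ← Real.rpow_mul hb.le]
  have e : p * η₁ / 2 * (1 / p) = η₁ / 2 := by field_simp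
  have hD' : D ^ (1 / p) ≠ 0 := by positivity
  rw [e, ← mul_assoc, div_mul_cancel₀ _ hD']
end
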